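/- Under Assumption (C), let u = (u¹,…,u^d) be a probabilistic solution with initial data (u₀¹,…,u₀^d) satisfying u^γ(0,·) = u₀^γ for every γ, and such that t ↦ u(t,·) is continuous in L¹_loc(ℝ)^d. Fix γ ∈ {1,…,d} and suppose that for Lebesgue-almost every v ∈ (0,1) the quantile trajectory t ↦ X_v^γ(t) is Lipschitz continuous and satisfies X_v^γ(t₂) − X_v^γ(t₁) = ∫_{t₁}^{t₂} λ^γ{u}(s, X_v^γ(s)) ds for all 0 ≤ t₁ ≤ t₂. Then u is a renormalised solution in the γ-th coordinate. -/

import Mathlib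

open MeasureTheory Filter Set

noncomputable section

/-- A cumulative distribution function on ℝ: nondecreasing, right-continuous,
tending to `0` at `-∞` and to `1` at `+∞`. -/
def IsCDF (F : ℝ → ℝ) : Prop :=
  Monotone F ∧ (∀ x : ℝ, ContinuousWithinAt F (Ici x) x) ∧
    Tendsto F atBot (nhds 0) ∧ Tendsto F atTop (nhds 1)

/-- The pseudo-inverse `F⁻¹(v) = inf {x | v ≤ F x}` of a CDF. -/
def cdfInv (F : ℝ → ℝ) (v : ℝ) : ℝ := sInf {x : ℝ | v ≤ F x}

/-- The velocity function `λ^γ{u}(t,x)` obtained by averaging the `γ`-th coordinate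
between the left limit `u^γ(t,x⁻)` and the value `u^γ(t,x)`. -/
def lamBrace {d : ℕ} (lam : Fin d → (Fin d → ℝ) → ℝ)
    (u : Fin d → ℝ → ℝ → ℝ) (γ : Fin d) (t x : ℝ) : ℝ :=
  ∫ θ in (0:ℝ)..1,
    lam γ (Function.update (fun γ' => u γ' t x) γ
      ((1 - θ) * Function.leftLim (u γ t) x + θ * u γ t x))

/-- A test function `φ` of class `C^{1,0}_c`: continuous, compactly supported,
with continuous time derivative `φt`. -/
def IsTestFun (φ φt : ℝ → ℝ → ℝ) : Prop :=
  Continuous (fun p : ℝ × ℝ => φ p.1 p.2) ∧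
    HasCompactSupport (fun p : ℝ × ℝ => φ p.1 p.2) ∧
    Continuous (fun p : ℝ × ℝ => φt p.1 p.2) ∧
    ∀ t x : ℝ, HasDerivAt (fun s => φ s x) (φt t x) t

/-- A probabilistic solution to the diagonal hyperbolic system
`∂_t u^γ + λ^γ(u) ∂_x u^γ = 0` with initial data `u0`. -/
def IsProbSol {d : ℕ} (lam : Fin d → (Fin d → ℝ) → ℝ)
    (u : Fin d → ℝ → ℝ → ℝ) (u0 : Fin d → ℝ → ℝ) : Prop :=
  (∀ γ : Fin d, Measurable fun p : Ici (0:ℝ) × ℝ => u γ (p.1 : ℝ) p.2) ∧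
  (∀ (γ : Fin d) (t : ℝ), 0 ≤ t → IsCDF (u γ t)) ∧
  (∀ γ : Fin d, IsCDF (u0 γ)) ∧
  ∃ μ : Fin d → ℝ → Measure ℝ,
    (∀ (γ : Fin d) (t : ℝ), IsProbabilityMeasure (μ γ t)) ∧
    (∀ (γ : Fin d) (t : ℝ), 0 ≤ t → ∀ x : ℝ, (μ γ t (Iic x)).toReal = u γ t x) ∧
    ∀ φ φt : Fin d → ℝ → ℝ → ℝ, (∀ γ, IsTestFun (φ γ) (φt γ)) →
      (∑ γ : Fin d, ((∫ t in Ici (0:ℝ), ∫ x : ℝ, φt γ t x * u γ t x) +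
          ∫ x : ℝ, φ γ 0 x * u0 γ x))
        = ∑ γ : Fin d,
            ∫ t in Ici (0:ℝ), ∫ x : ℝ, φ γ t x * lamBrace lam u γ t x ∂(μ γ t)

/-- Continuity of `t ↦ u(t,·)` in `L¹_loc(ℝ)^d` on `[0,∞)`. -/
def ContL1loc {d : ℕ} (u : Fin d → ℝ → ℝ → ℝ) : Prop :=
  ∀ (γ : Fin d) (a b t₀ : ℝ), 0 ≤ t₀ →
    Tendsto (fun t => ∫ x in Icc a b, |u γ t x - u γ t₀ x|)
      (nhdsWithin t₀ (Ici 0)) (nhds 0)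

/-- A renormalised solution in the `γ`-th coordinate: the weak formulation holds with
`u^γ` replaced by `β(u^γ)` for every `C¹` increasing `β : [0,1] → ℝ` with
`β(0) = 0`, `β(1) = 1`. -/
def IsRenormalised {d : ℕ} (lam : Fin d → (Fin d → ℝ) → ℝ)
    (u : Fin d → ℝ → ℝ → ℝ) (u0 : Fin d → ℝ → ℝ) (γ : Fin d) : Prop :=
  ∀ β : ℝ → ℝ, ContDiffOn ℝ 1 β (Icc 0 1) → StrictMonoOn β (Icc 0 1) →
    β 0 = 0 → β 1 = 1 →
    ∀ φ φt : ℝ → ℝ → ℝ, IsTestFun φ φt →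
      ∃ ν : ℝ → Measure ℝ,
        (∀ t : ℝ, IsProbabilityMeasure (ν t)) ∧
        (∀ t : ℝ, 0 ≤ t → ∀ x : ℝ, (ν t (Iic x)).toReal = β (u γ t x)) ∧
        (∫ t in Ici (0:ℝ), ∫ x : ℝ, φt t x * β (u γ t x)) +
            (∫ x : ℝ, φ 0 x * β (u0 γ x))
          = ∫ t in Ici (0:ℝ), ∫ x : ℝ, φ t x * lamBrace lam u γ t x ∂(ν t)

/-! The spatial tail integral `Φ(t, y) = ∫ x in [y, ∞), φ(t, x) dx` of a test function is `C¹`, with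
`∂_y Φ = -φ` and `∂_t Φ` the tail integral of `∂_t φ`. If `X_v` solves `X_v' = λ{u}(t, X_v)`, the
chain rule along `t ↦ (t, X_v(t))` therefore integrates `∫ x in [X_v(t), ∞), ∂_tφ(t, x) dx` minus
`φ(t, X_v(t)) λ{u}(t, X_v(t))` over `[0, ∞)` to `-Φ(0, X_v(0))`. Average this over `v ∈ (0,1)` with
weight `β'(v) dv`: since `X_v(t) ≤ x` means `v ≤ u(t, x)`, the law of `X_v(t)` has CDF
`β ∘ u(t, ·)`, and Fubini turns each averaged tail integral into an integral against that CDF. -/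

open Function

section Curves

variable {E : Type*} [NormedAddCommGroup E] [NormedSpace ℝ E]

lemma integral_fderiv_comp_eq_sub_of_lipschitzOnWith {Φ : E → ℝ} {Φ' : E → E →L[ℝ] ℝ}
    {c c' : ℝ → E} {K : NNReal} {a b : ℝ} (hΦ : ∀ p, HasStrictFDerivAt Φ (Φ' p) p)
    (hc : LipschitzOnWith K c (uIcc a b)) (hc' : ∀ᵐ t, t ∈ uIoc a b → HasDerivAt c (c' t) t) :
    ∫ t in a..b, Φ' (c t) (c' t) = Φ (c b) - Φ (c a) := by
  have hΦ_loc : LocallyLipschitz Φ := fun p => (hΦ p).exists_lipschitzOnWith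
  obtain ⟨L, hL⟩ := (hΦ_loc.locallyLipschitzOn (s := c '' uIcc a b))
    |>.exists_lipschitzOnWith_of_compact (isCompact_uIcc.image_of_continuousOn hc.continuousOn)
  have hΦc : LipschitzOnWith (L * K) (Φ ∘ c) (uIcc a b) := hL.comp hc (mapsTo_image c _)
  rw [← comp_apply (f := Φ), ← comp_apply (f := Φ) (x := a),
    ← hΦc.absolutelyContinuousOnInterval.integral_deriv_eq_sub]
  refine intervalIntegral.integral_congr_ae ?_
  filter_upwards [hc'] with t ht hmem
  exact ((hΦ (c t)).hasFDerivAt.comp_hasDerivAt t (ht hmem)).deriv.symm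

end Curves

section Primitives

variable {E : Type*} [NormedAddCommGroup E] {X g : ℝ → E} {a : ℝ} {M : NNReal}

lemma intervalIntegrable_of_norm_le (hg : AEStronglyMeasurable g) (hM : ∀ t, ‖g t‖ ≤ M) (s t : ℝ) :
    IntervalIntegrable g volume s t :=
  intervalIntegrable_const.mono_fun hg.restrict
    (Eventually.of_forall fun r => (hM r).trans (Real.le_norm_self _))

variable [NormedSpace ℝ E]

lemma lipschitzOnWith_of_sub_eq_intervalIntegral (hg : AEStronglyMeasurable g)
    (hM : ∀ t, ‖g t‖ ≤ M) (hX : ∀ t, a ≤ t → X t - X a = ∫ s in a..t, g s) :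
    LipschitzOnWith M X (Ici a) := by
  have hgi := intervalIntegrable_of_norm_le hg hM
  refine LipschitzOnWith.of_dist_le_mul fun s hs t ht => ?_
  rw [dist_eq_norm, ← sub_sub_sub_cancel_right _ _ (X a), hX s hs, hX t ht,
    intervalIntegral.integral_interval_sub_left (hgi a s) (hgi a t), Real.dist_eq]
  exact intervalIntegral.norm_integral_le_of_norm_le_const fun r _ => hM r

lemma ae_hasDerivAt_of_sub_eq_intervalIntegral [CompleteSpace E] {b : ℝ}
    (hg : IntervalIntegrable g volume a b)
    (hX : ∀ t, a ≤ t → X t - X a = ∫ s in a..t, g s) :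
    ∀ᵐ t, t ∈ Ioc a b → HasDerivAt X (g t) t := by
  filter_upwards [hg.ae_hasDerivAt_integral] with t ht hmem
  have hderiv : HasDerivAt (fun s => ∫ r in a..s, g r) (g t) t :=
    ht (Icc_subset_uIcc (Ioc_subset_Icc_self hmem)) a left_mem_uIcc
  refine (hderiv.const_add (X a)).congr_of_eventuallyEq ?_
  filter_upwards [Ioi_mem_nhds hmem.1] with s hs
  rw [← hX s (le_of_lt hs), add_sub_cancel]

end Primitives

section TailIntegral

/-- The spatial tail integral `∫ x in [y, ∞), f(t, x) dx` of a function `f` of time and space, as a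
function of the pair `(t, y)`. -/
def tailIntegral (f : ℝ → ℝ → ℝ) (p : ℝ × ℝ) : ℝ := ∫ x in Ici p.2, f p.1 x

variable {f : ℝ → ℝ → ℝ}

lemma exists_integrable_bound (hf : Continuous (uncurry f)) (hfs : HasCompactSupport (uncurry f)) :
    ∃ g : ℝ → ℝ, Integrable g ∧ ∀ t x, ‖f t x‖ ≤ g t ∧ ‖f t x‖ ≤ g x := by
  obtain ⟨C, hC⟩ := hf.bounded_above_of_compact_support hfs
  obtain ⟨R, -, hR⟩ := hfs.exists_pos_le_norm
  have hg : Integrable ((Metric.closedBall (0 : ℝ) R).indicator fun _ => C) :=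
    (integrable_indicator_iff measurableSet_closedBall).mpr
      (integrableOn_const measure_closedBall_lt_top.ne)
  have key (p : ℝ × ℝ) (r : ℝ) (hr : ‖r‖ ≤ ‖p‖) :
      ‖uncurry f p‖ ≤ (Metric.closedBall (0 : ℝ) R).indicator (fun _ => C) r := by
    by_cases hrR : r ∈ Metric.closedBall (0 : ℝ) R
    · simpa only [indicator_of_mem hrR] using hC p
    · rw [indicator_of_notMem hrR, hR p, norm_zero]
      rw [mem_closedBall_zero_iff, not_le] at hrR
      exact hrR.le.trans hr
  exact ⟨_, hg, fun t x => ⟨key (t, x) t (norm_fst_le (t, x)), key (t, x) x (norm_snd_le (t, x))⟩⟩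

lemma integrable_slice (hf : Continuous (uncurry f)) (hfs : HasCompactSupport (uncurry f)) (t : ℝ) :
    Integrable (f t) := by
  obtain ⟨g, hg, hfg⟩ := exists_integrable_bound hf hfs
  exact hg.mono' (hf.uncurry_left t).aestronglyMeasurable
    (Eventually.of_forall fun x => (hfg t x).2)

lemma exists_tailIntegral_eq_intervalIntegral (hf : Continuous (uncurry f))
    (hfs : HasCompactSupport (uncurry f)) :
    ∃ R, ∀ p, tailIntegral f p = ∫ x in p.2..R, f p.1 x := by
  obtain ⟨R, -, hR⟩ := hfs.exists_pos_le_norm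
  refine ⟨R, fun p => ?_⟩
  have hf_int : Integrable (f p.1) := integrable_slice hf hfs p.1
  have hzero : ∫ x in Ioi R, f p.1 x = 0 := setIntegral_eq_zero_of_forall_eq_zero fun x hx =>
    hR (p.1, x) <| hx.le.trans ((le_abs_self x).trans (norm_snd_le (p.1, x)))
  rw [tailIntegral, integral_Ici_eq_integral_Ioi,
    ← intervalIntegral.integral_Ioi_sub_Ioi' hf_int.integrableOn hf_int.integrableOn, hzero,
    sub_zero]

lemma continuous_tailIntegral (hf : Continuous (uncurry f)) (hfs : HasCompactSupport (uncurry f)) :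
    Continuous (tailIntegral f) := by
  obtain ⟨R, hR⟩ := exists_tailIntegral_eq_intervalIntegral hf hfs
  simp_rw [funext hR, intervalIntegral.integral_symm R]
  refine (intervalIntegral.continuous_parametric_intervalIntegral_of_continuous
    (f := fun (p : ℝ × ℝ) x => f p.1 x) ?_ continuous_snd).neg
  exact hf.comp (by fun_prop : Continuous fun q : (ℝ × ℝ) × ℝ => (q.1.1, q.2))

lemma norm_tailIntegral_le {t : ℝ} (hf : Integrable (f t)) (y : ℝ) :
    ‖tailIntegral f (t, y)‖ ≤ ∫ x, ‖f t x‖ :=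
  (norm_integral_le_integral_norm _).trans <|
    setIntegral_le_integral hf.norm (Eventually.of_forall fun _ => norm_nonneg _)

lemma hasDerivAt_tailIntegral_snd (hf : Continuous (uncurry f))
    (hfs : HasCompactSupport (uncurry f)) (t y : ℝ) :
    HasDerivAt (fun y => tailIntegral f (t, y)) (-f t y) y := by
  obtain ⟨R, hR⟩ := exists_tailIntegral_eq_intervalIntegral hf hfs
  simp_rw [hR]
  have hft : Continuous (f t) := hf.uncurry_left t
  exact intervalIntegral.integral_hasDerivAt_left (hft.intervalIntegrable _ _)
    hft.stronglyMeasurable.stronglyMeasurableAtFilter hft.continuousAt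

end TailIntegral

namespace IsTestFun

variable {φ φt : ℝ → ℝ → ℝ}

lemma hasCompactSupport_timeDeriv (h : IsTestFun φ φt) : HasCompactSupport (uncurry φt) := by
  refine HasCompactSupport.intro h.2.1 fun ⟨t, x⟩ hp => ?_
  have hφ_zero : ∀ᶠ s in nhds t, φ s x = 0 :=
    (Continuous.prodMk_left x).continuousAt.eventually
      (notMem_tsupport_iff_eventuallyEq.mp hp)
  exact (h.2.2.2 t x).unique ((hasDerivAt_const t (0 : ℝ)).congr_of_eventuallyEq hφ_zero)

lemma exists_pos_forall_ge_eq_zero (h : IsTestFun φ φt) :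
    ∃ T, 0 < T ∧ ∀ t, T ≤ t → ∀ x, φ t x = 0 ∧ φt t x = 0 := by
  obtain ⟨R, hR, hφ⟩ := HasCompactSupport.exists_pos_le_norm (f := uncurry φ) h.2.1
  obtain ⟨R', -, hφt⟩ := h.hasCompactSupport_timeDeriv.exists_pos_le_norm
  refine ⟨max R R', lt_max_of_lt_left hR, fun t ht x => ?_⟩
  have hle : t ≤ ‖(t, x)‖ := (le_abs_self t).trans (norm_fst_le (t, x))
  exact ⟨hφ (t, x) ((le_max_left _ _).trans (ht.trans hle)),
    hφt (t, x) ((le_max_right _ _).trans (ht.trans hle))⟩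

lemma hasDerivAt_tailIntegral_fst (h : IsTestFun φ φt) (t y : ℝ) :
    HasDerivAt (fun t => tailIntegral φ (t, y)) (tailIntegral φt (t, y)) t := by
  obtain ⟨g, hg, hφt_le⟩ := exists_integrable_bound h.2.2.1 h.hasCompactSupport_timeDeriv
  have hφ_meas (s : ℝ) : AEStronglyMeasurable (φ s) (volume.restrict (Ici y)) :=
    (Continuous.uncurry_left s h.1).aestronglyMeasurable
  exact (hasDerivAt_integral_of_dominated_loc_of_deriv_le univ_mem
    (Eventually.of_forall hφ_meas) (integrable_slice h.1 h.2.1 t).integrableOn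
    (Continuous.uncurry_left t h.2.2.1).aestronglyMeasurable
    (Eventually.of_forall fun x s _ => (hφt_le s x).2) hg.integrableOn
    (Eventually.of_forall fun x s _ => h.2.2.2 s x)).2

lemma hasStrictFDerivAt_tailIntegral (h : IsTestFun φ φt) (p : ℝ × ℝ) :
    HasStrictFDerivAt (tailIntegral φ)
      ((ContinuousLinearMap.toSpanSingleton ℝ (tailIntegral φt p)).coprod
        (ContinuousLinearMap.toSpanSingleton ℝ (-φ p.1 p.2))) p := by
  have hspan : Continuous (ContinuousLinearMap.toSpanSingleton ℝ : ℝ → ℝ →L[ℝ] ℝ) :=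
    (ContinuousLinearMap.toSpanSingletonCLE (𝕜 := ℝ) (E := ℝ)).continuous
  exact hasStrictFDerivAt_uncurry_coprod (𝕜 := ℝ) (f := fun t y => tailIntegral φ (t, y))
    (f₁ := fun t y => ContinuousLinearMap.toSpanSingleton ℝ (tailIntegral φt (t, y)))
    (f₂ := fun t y => ContinuousLinearMap.toSpanSingleton ℝ (-φ t y))
    (Eventually.of_forall fun q => (h.hasDerivAt_tailIntegral_fst q.1 q.2).hasFDerivAt)
    (Eventually.of_forall fun q => (hasDerivAt_tailIntegral_snd h.1 h.2.1 q.1 q.2).hasFDerivAt)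
    (hspan.comp (continuous_tailIntegral h.2.2.1 h.hasCompactSupport_timeDeriv)).continuousAt
    (hspan.comp h.1.neg).continuousAt

lemma intervalIntegral_tailIntegral_sub_mul (h : IsTestFun φ φt) {X g : ℝ → ℝ} {M : NNReal}
    (hg : AEStronglyMeasurable g) (hM : ∀ t, ‖g t‖ ≤ M)
    (hX : ∀ t, 0 ≤ t → X t - X 0 = ∫ s in (0 : ℝ)..t, g s) {T : ℝ} (hT : 0 ≤ T) :
    ∫ t in (0 : ℝ)..T, (tailIntegral φt (t, X t) - φ t (X t) * g t)
      = tailIntegral φ (T, X T) - tailIntegral φ (0, X 0) := by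
  have hX_lip : LipschitzOnWith M X (uIcc 0 T) :=
    (lipschitzOnWith_of_sub_eq_intervalIntegral hg hM hX).mono
      (uIcc_of_le hT ▸ Icc_subset_Ici_self)
  have hX_deriv : ∀ᵐ t, t ∈ uIoc 0 T → HasDerivAt X (g t) t :=
    uIoc_of_le hT ▸ ae_hasDerivAt_of_sub_eq_intervalIntegral
      (intervalIntegrable_of_norm_le hg hM 0 T) hX
  rw [← integral_fderiv_comp_eq_sub_of_lipschitzOnWith (c := fun t => (t, X t))
    (c' := fun t => (1, g t)) h.hasStrictFDerivAt_tailIntegral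
    (LipschitzWith.id.lipschitzOnWith.prodMk hX_lip)
    (hX_deriv.mono fun t ht hmem => (hasDerivAt_id t).prodMk (ht hmem))]
  simp only [ContinuousLinearMap.coprod_apply, ContinuousLinearMap.toSpanSingleton_apply,
    smul_eq_mul, one_mul, mul_comm (g _), neg_mul, sub_eq_add_neg]

lemma integral_tailIntegral_sub_mul (h : IsTestFun φ φt) {X g : ℝ → ℝ} {M : NNReal}
    (hg : AEStronglyMeasurable g) (hM : ∀ t, ‖g t‖ ≤ M)
    (hX : ∀ t, 0 ≤ t → X t - X 0 = ∫ s in (0 : ℝ)..t, g s) :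
    ∫ t in Ici (0 : ℝ), (tailIntegral φt (t, X t) - φ t (X t) * g t)
      = -tailIntegral φ (0, X 0) := by
  obtain ⟨T, hT, hzero⟩ := h.exists_pos_forall_ge_eq_zero
  have htail (f : ℝ → ℝ → ℝ) (t y : ℝ) (hf : ∀ x, f t x = 0) : tailIntegral f (t, y) = 0 := by
    simp only [tailIntegral, hf, integral_zero]
  have hvanish (t : ℝ) (ht : t ∈ Ioi 0 \ Ioc 0 T) :
      tailIntegral φt (t, X t) - φ t (X t) * g t = 0 := by
    have hTt : T ≤ t := le_of_lt (not_le.mp fun hle => ht.2 ⟨ht.1, hle⟩)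
    rw [htail φt t _ fun x => (hzero t hTt x).2, (hzero t hTt _).1, zero_mul, sub_zero]
  rw [integral_Ici_eq_integral_Ioi, setIntegral_eq_of_subset_of_forall_sdiff_eq_zero
      measurableSet_Ioi Ioc_subset_Ioi_self hvanish, ← intervalIntegral.integral_of_le hT.le,
    h.intervalIntegral_tailIntegral_sub_mul hg hM hX hT.le,
    htail φ T _ fun x => (hzero T le_rfl x).1, zero_sub]

end IsTestFun

lemma integral_mul_measureReal_map_Iic {α Ω : Type*} [LinearOrder α] [TopologicalSpace α]
    [OrderClosedTopology α] [SecondCountableTopology α] [MeasurableSpace α] [BorelSpace α]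
    [MeasurableSpace Ω] {ρ : Measure α} [SFinite ρ] {m : Measure Ω} [IsFiniteMeasure m]
    {f : α → ℝ} (hf : Integrable f ρ) {Y : Ω → α} (hY : Measurable Y) :
    ∫ x, f x * (m.map Y).real (Iic x) ∂ρ = ∫ ω, ∫ x in Ici (Y ω), f x ∂ρ ∂m := by
  have hmeas : MeasurableSet {p : α × Ω | Y p.2 ≤ p.1} :=
    measurableSet_le (hY.comp measurable_snd) measurable_fst
  have hint : Integrable ({p : α × Ω | Y p.2 ≤ p.1}.indicator fun p => f p.1) (ρ.prod m) :=
    (hf.comp_fst m).indicator hmeas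
  calc ∫ x, f x * (m.map Y).real (Iic x) ∂ρ
      = ∫ x, ∫ ω, (Y ⁻¹' Iic x).indicator (fun _ => f x) ω ∂m ∂ρ := by
        simp_rw [integral_indicator_const _ (hY measurableSet_Iic),
          map_measureReal_apply hY measurableSet_Iic, smul_eq_mul, mul_comm]
    _ = ∫ ω, ∫ x, (Ici (Y ω)).indicator f x ∂ρ ∂m := integral_integral_swap hint
    _ = ∫ ω, ∫ x in Ici (Y ω), f x ∂ρ ∂m :=
        integral_congr_ae (Eventually.of_forall fun ω => integral_indicator measurableSet_Ici)

section Superposition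

variable {Ω : Type*} [MeasurableSpace Ω] {m : Measure Ω} [IsFiniteMeasure m] {X : ℝ → Ω → ℝ}
  {f φ φt G : ℝ → ℝ → ℝ} {M : NNReal}

lemma integrable_tailIntegral_prod (hf : Continuous (uncurry f))
    (hfs : HasCompactSupport (uncurry f)) (hX : Measurable (uncurry X)) (s : Set ℝ) :
    Integrable (fun p : ℝ × Ω => tailIntegral f (p.1, X p.1 p.2))
      ((volume.restrict s).prod m) := by
  have hbound : Integrable fun t => ∫ x, ‖f t x‖ :=
    (hf.integrable_of_hasCompactSupport hfs).integral_norm_prod_left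
  exact (hbound.restrict.comp_fst m).mono'
    ((continuous_tailIntegral hf hfs).measurable.comp
      (measurable_fst.prodMk hX)).aestronglyMeasurable
    (Eventually.of_forall fun p => norm_tailIntegral_le (integrable_slice hf hfs p.1) _)

lemma integrable_mul_prod (hf : Continuous (uncurry f)) (hfs : HasCompactSupport (uncurry f))
    (hX : Measurable (uncurry X)) (hG : Measurable (uncurry G)) (hM : ∀ t x, ‖G t x‖ ≤ M)
    (s : Set ℝ) :
    Integrable (fun p : ℝ × Ω => f p.1 (X p.1 p.2) * G p.1 (X p.1 p.2))
      ((volume.restrict s).prod m) := by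
  obtain ⟨g, hg, hfg⟩ := exists_integrable_bound hf hfs
  have hpair : Measurable fun p : ℝ × Ω => (p.1, X p.1 p.2) := measurable_fst.prodMk hX
  refine (((hg.mul_const (M : ℝ)).restrict).comp_fst m).mono'
    ((hf.measurable.comp hpair).mul (hG.comp hpair)).aestronglyMeasurable
    (Eventually.of_forall fun p => ?_)
  rw [norm_mul]
  exact mul_le_mul (hfg p.1 _).1 (hM _ _) (norm_nonneg _) ((norm_nonneg _).trans (hfg p.1 0).1)

theorem weak_formulation_of_characteristics (hX : Measurable (uncurry X))
    (hG : Measurable (uncurry G)) (hM : ∀ t x, ‖G t x‖ ≤ M)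
    (hchar : ∀ᵐ ω ∂m, ∀ t, 0 ≤ t → X t ω - X 0 ω = ∫ s in (0 : ℝ)..t, G s (X s ω))
    (h : IsTestFun φ φt) :
    (∫ t in Ici (0 : ℝ), ∫ x, φt t x * (m.map (X t)).real (Iic x)) +
        ∫ x, φ 0 x * (m.map (X 0)).real (Iic x)
      = ∫ t in Ici (0 : ℝ), ∫ x, φ t x * G t x ∂(m.map (X t)) := by
  have hXt (t : ℝ) : Measurable (X t) := hX.comp measurable_prodMk_left
  have hφt_supp := h.hasCompactSupport_timeDeriv
  have htail {f : ℝ → ℝ → ℝ} (hf : Continuous (uncurry f)) (hfs : HasCompactSupport (uncurry f))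
      (t : ℝ) : ∫ x, f t x * (m.map (X t)).real (Iic x) = ∫ ω, tailIntegral f (t, X t ω) ∂m :=
    integral_mul_measureReal_map_Iic (integrable_slice hf hfs t) (hXt t)
  have hmap (t : ℝ) :
      ∫ x, φ t x * G t x ∂(m.map (X t)) = ∫ ω, φ t (X t ω) * G t (X t ω) ∂m :=
    integral_map (hXt t).aemeasurable
      ((Continuous.uncurry_left t h.1).measurable.mul
        (hG.comp measurable_prodMk_left)).aestronglyMeasurable
  have hint_tail := integrable_tailIntegral_prod (m := m) h.2.2.1 hφt_supp hX (Ici 0)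
  have hint_mul := integrable_mul_prod (m := m) h.1 h.2.1 hX hG hM (Ici 0)
  have hchain : ∀ᵐ ω ∂m, ∫ t in Ici (0 : ℝ),
      (tailIntegral φt (t, X t ω) - φ t (X t ω) * G t (X t ω)) = -tailIntegral φ (0, X 0 ω) := by
    filter_upwards [hchar] with ω hω
    refine h.integral_tailIntegral_sub_mul (X := fun t => X t ω) ?_ (fun t => hM t _) hω
    exact (hG.comp (measurable_id.prodMk
      (hX.comp measurable_prodMk_right))).aestronglyMeasurable
  have key : (∫ t in Ici (0 : ℝ), ∫ ω, tailIntegral φt (t, X t ω) ∂m) -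
      ∫ t in Ici (0 : ℝ), ∫ ω, φ t (X t ω) * G t (X t ω) ∂m
        = -∫ ω, tailIntegral φ (0, X 0 ω) ∂m := by
    rw [← integral_integral_sub hint_tail hint_mul,
      integral_integral_swap (hint_tail.sub hint_mul), integral_congr_ae hchain, integral_neg]
  simp_rw [htail h.2.2.1 hφt_supp, htail h.1 h.2.1, hmap]
  linarith only [key]

end Superposition

lemma lintegral_Ioo_ofReal_deriv_of_monotoneOn {β : ℝ → ℝ} {a b : ℝ} (hab : a ≤ b)
    (hcont : ContinuousOn β (Icc a b)) (hdiff : DifferentiableOn ℝ β (Ioo a b))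
    (hmono : MonotoneOn β (Icc a b)) :
    ∫⁻ v in Ioo a b, ENNReal.ofReal (deriv β v) = ENNReal.ofReal (β b - β a) := by
  have hderiv : ∀ v ∈ Ioo a b, HasDerivAt β (deriv β v) v := fun v hv =>
    (hdiff.differentiableAt (Ioo_mem_nhds hv.1 hv.2)).hasDerivAt
  have hpos : ∀ v ∈ Ioo a b, 0 ≤ deriv β v := fun v hv => by
    rw [← derivWithin_of_mem_nhds (Icc_mem_nhds hv.1 hv.2)]
    exact hmono.derivWithin_nonneg
  have hint : IntegrableOn (deriv β) (Ioc a b) :=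
    intervalIntegral.integrableOn_deriv_of_nonneg hcont hderiv hpos
  rw [← intervalIntegral.integral_eq_sub_of_hasDerivAt_of_le hab hcont hderiv
      ((intervalIntegrable_iff_integrableOn_Ioc_of_le hab).mpr hint),
    intervalIntegral.integral_of_le hab, integral_Ioc_eq_integral_Ioo,
    ofReal_integral_eq_lintegral_ofReal (hint.mono_set Ioo_subset_Ioc_self)
      (ae_restrict_of_forall_mem measurableSet_Ioo hpos)]

lemma exists_measure_Ioo_measureReal_eq_sub {β : ℝ → ℝ} {a b : ℝ} (hab : a ≤ b)
    (hcont : ContinuousOn β (Icc a b)) (hdiff : DifferentiableOn ℝ β (Ioo a b))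
    (hmono : MonotoneOn β (Icc a b)) :
    ∃ m : Measure (Ioo a b), m ≪ volume.comap ((↑) : Ioo a b → ℝ) ∧
      m univ = ENNReal.ofReal (β b - β a) ∧
      ∀ w ∈ Icc a b, m.real {v | (v : ℝ) ≤ w} = β w - β a := by
  let m := (volume.comap ((↑) : Ioo a b → ℝ)).withDensity fun v => ENNReal.ofReal (deriv β v)
  have hmass : ∀ w ∈ Icc a b, m {v | (v : ℝ) ≤ w} = ENNReal.ofReal (β w - β a) := fun w hw => by
    have himage : ((↑) '' {v : Ioo a b | (v : ℝ) ≤ w} : Set ℝ) =ᵐ[volume] Ioo a w := by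
      have himage_eq : ((↑) '' {v : Ioo a b | (v : ℝ) ≤ w} : Set ℝ) = Ioo a b ∩ Iic w :=
        Subtype.image_preimage_coe _ (Iic w)
      have hIoo_eq : Ioo a w = Ioo a b ∩ Iio w := by rw [Ioo_inter_Iio, min_eq_right hw.2]
      rw [himage_eq, hIoo_eq]
      exact (ae_eq_refl _).inter Iio_ae_eq_Iic.symm
    have hsub : Icc a w ⊆ Icc a b := Icc_subset_Icc_right hw.2
    rw [withDensity_apply _ (measurableSet_le measurable_subtype_coe measurable_const),
      setLIntegral_subtype measurableSet_Ioo _ fun v => ENNReal.ofReal (deriv β v),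
      setLIntegral_congr himage]
    exact lintegral_Ioo_ofReal_deriv_of_monotoneOn hw.1 (hcont.mono hsub)
      (hdiff.mono (Ioo_subset_Ioo_right hw.2)) (hmono.mono hsub)
  refine ⟨m, withDensity_absolutelyContinuous _ _, ?_, fun w hw => ?_⟩
  · rw [← hmass b (right_mem_Icc.mpr hab)]
    congr 1
    exact (eq_univ_of_forall fun v => v.2.2.le).symm
  · rw [measureReal_def, hmass w hw, ENNReal.toReal_ofReal
      (sub_nonneg.mpr (hmono (left_mem_Icc.mpr hab) hw hw.1))]

lemma IsCDF.mem_Icc {F : ℝ → ℝ} (hF : IsCDF F) (x : ℝ) : F x ∈ Icc (0 : ℝ) 1 :=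
  ⟨hF.1.le_of_tendsto hF.2.2.1 x, hF.1.ge_of_tendsto hF.2.2.2 x⟩

lemma IsCDF.cdfInv_le_iff {F : ℝ → ℝ} (hF : IsCDF F) {v : ℝ} (hv : v ∈ Ioo (0 : ℝ) 1) {x : ℝ} :
    cdfInv F v ≤ x ↔ v ≤ F x := by
  obtain ⟨hmono, hright, hbot, htop⟩ := hF
  have hne : {y | v ≤ F y}.Nonempty := (htop.eventually (eventually_ge_nhds hv.2)).exists
  have hbdd : BddBelow {y | v ≤ F y} := by
    obtain ⟨y, hy⟩ := (hbot.eventually (eventually_lt_nhds hv.1)).exists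
    exact ⟨y, fun z hz => (hmono.reflect_lt (hy.trans_le hz)).le⟩
  refine ⟨fun hx => ?_, fun hx => csInf_le hbdd hx⟩
  refine ge_of_tendsto ((hright x).mono Ioi_subset_Ici_self) ?_
  filter_upwards [self_mem_nhdsWithin] with y hy
  obtain ⟨z, hz, hzy⟩ := exists_lt_of_csInf_lt hne (hx.trans_lt hy)
  exact le_trans hz (hmono hzy.le)

lemma measurable_cdfInv {T : Type*} [MeasurableSpace T] {U : T → ℝ → ℝ}
    (hU : ∀ t, IsCDF (U t)) (hmeas : ∀ x, Measurable fun t => U t x) :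
    Measurable fun p : T × Ioo (0 : ℝ) 1 => cdfInv (U p.1) p.2 := by
  refine measurable_of_Iic fun x => ?_
  have hpre : (fun p : T × Ioo (0 : ℝ) 1 => cdfInv (U p.1) p.2) ⁻¹' Iic x
      = {p | (p.2 : ℝ) ≤ U p.1 x} := ext fun p => (hU p.1).cdfInv_le_iff p.2.2
  rw [hpre]
  exact measurableSet_le (measurable_subtype_coe.comp measurable_snd)
    ((hmeas x).comp measurable_fst)

lemma measurable_leftLim {T : Type*} [MeasurableSpace T] {f : T → ℝ → ℝ}
    (hf : Measurable (uncurry f)) (hmono : ∀ t, Monotone (f t)) :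
    Measurable fun p : T × ℝ => leftLim (f p.1) p.2 := by
  have hf_shift (n : ℕ) : Measurable fun p : T × ℝ => f p.1 (p.2 - 1 / ((n : ℝ) + 1)) :=
    hf.comp (measurable_fst.prodMk (measurable_snd.sub_const _))
  refine measurable_of_tendsto_metrizable hf_shift (tendsto_pi_nhds.mpr fun p => ?_)
  refine ((hmono p.1).tendsto_leftLim p.2).comp (tendsto_nhdsWithin_iff.mpr ⟨?_, ?_⟩)
  · simpa only [sub_zero] using
      tendsto_const_nhds.sub (tendsto_one_div_add_atTop_nhds_zero_nat (𝕜 := ℝ))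
  · exact Eventually.of_forall fun n => mem_Iio.mpr (sub_lt_self _ Nat.one_div_pos_of_nat)

lemma IsCDF.leftLim_mem_Icc {F : ℝ → ℝ} (hF : IsCDF F) (x : ℝ) : leftLim F x ∈ Icc (0 : ℝ) 1 :=
  ⟨(hF.mem_Icc (x - 1)).1.trans (hF.1.le_leftLim (sub_one_lt x)),
    (hF.1.leftLim_le le_rfl).trans (hF.mem_Icc x).2⟩

section LamBrace

variable {d : ℕ} {lam : Fin d → (Fin d → ℝ) → ℝ} {u w : Fin d → ℝ → ℝ → ℝ} {γ : Fin d} {t : ℝ}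
  {M : NNReal}

/-- The state at which `lamBrace` evaluates `λ^γ`: the vector `u(t, x)` whose `γ`-th coordinate is
replaced by the point `(1 - θ) u^γ(t, x⁻) + θ u^γ(t, x)` of its jump. -/
def interpolatedState (u : Fin d → ℝ → ℝ → ℝ) (γ : Fin d) (t x θ : ℝ) : Fin d → ℝ :=
  update (fun γ' => u γ' t x) γ ((1 - θ) * leftLim (u γ t) x + θ * u γ t x)

lemma interpolatedState_mem_Icc (hu : ∀ γ', IsCDF (u γ' t)) (x : ℝ) {θ : ℝ}
    (hθ : θ ∈ Icc (0 : ℝ) 1) : interpolatedState u γ t x θ ∈ Icc (0 : Fin d → ℝ) 1 := by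
  have hjump : (1 - θ) * leftLim (u γ t) x + θ * u γ t x ∈ Icc (0 : ℝ) 1 :=
    convex_Icc (0 : ℝ) 1 ((hu γ).leftLim_mem_Icc x) ((hu γ).mem_Icc x) (sub_nonneg.mpr hθ.2) hθ.1
      (sub_add_cancel 1 θ)
  have hcoord (i : Fin d) : interpolatedState u γ t x θ i ∈ Icc (0 : ℝ) 1 := by
    rcases eq_or_ne i γ with rfl | hi
    · rwa [interpolatedState, update_self]
    · rw [interpolatedState, update_of_ne hi]
      exact (hu i).mem_Icc x
  exact ⟨fun i => (hcoord i).1, fun i => (hcoord i).2⟩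

lemma measurable_interpolatedState (hum : ∀ γ', Measurable (uncurry (u γ')))
    (hmono : ∀ t, Monotone (u γ t)) :
    Measurable fun q : (ℝ × ℝ) × ℝ => interpolatedState u γ q.1.1 q.1.2 q.2 := by
  have hu_fst (i : Fin d) : Measurable fun q : (ℝ × ℝ) × ℝ => u i q.1.1 q.1.2 :=
    (hum i).comp measurable_fst
  refine measurable_pi_iff.mpr fun i => ?_
  rcases eq_or_ne i γ with rfl | hi
  · simp only [interpolatedState, update_self]
    exact ((measurable_snd.const_sub 1).mul
      ((measurable_leftLim (hum i) hmono).comp measurable_fst)).add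
      (measurable_snd.mul (hu_fst i))
  · simp only [interpolatedState, update_of_ne hi]
    exact hu_fst i

lemma norm_lamBrace_le (hM : ∀ y ∈ Icc (0 : Fin d → ℝ) 1, ‖lam γ y‖ ≤ M)
    (hu : ∀ γ', IsCDF (u γ' t)) (x : ℝ) : ‖lamBrace lam u γ t x‖ ≤ M := by
  have hbound : ∀ θ ∈ uIoc (0 : ℝ) 1, ‖lam γ (interpolatedState u γ t x θ)‖ ≤ M := fun θ hθ =>
    hM _ (interpolatedState_mem_Icc hu x (uIcc_of_le (zero_le_one (α := ℝ)) ▸ uIoc_subset_uIcc hθ))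
  calc ‖lamBrace lam u γ t x‖ ≤ M * |(1 : ℝ) - 0| :=
        intervalIntegral.norm_integral_le_of_norm_le_const hbound
    _ = M := by rw [sub_zero, abs_one, mul_one]

lemma measurable_lamBrace (hlam : Measurable fun y : Icc (0 : Fin d → ℝ) 1 => lam γ y)
    (hum : ∀ γ', Measurable (uncurry (u γ'))) (hu : ∀ γ' t, IsCDF (u γ' t)) :
    Measurable (uncurry (lamBrace lam u γ)) := by
  have hstate : Measurable fun q : (ℝ × ℝ) × unitInterval =>
      (⟨interpolatedState u γ q.1.1 q.1.2 q.2,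
        interpolatedState_mem_Icc (fun γ' => hu γ' q.1.1) q.1.2 q.2.2⟩ : Icc (0 : Fin d → ℝ) 1) :=
    ((measurable_interpolatedState hum fun t => (hu γ t).1).comp
      (measurable_fst.prodMk (measurable_subtype_coe.comp measurable_snd))).subtype_mk
  have hint : uncurry (lamBrace lam u γ) = fun p => ∫ θ : unitInterval,
      lam γ (interpolatedState u γ p.1 p.2 θ) := by
    funext p
    rw [unitInterval.volume_def, integral_subtype_comap measurableSet_Icc fun θ =>
      lam γ (interpolatedState u γ p.1 p.2 θ), integral_Icc_eq_integral_Ioc,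
      ← intervalIntegral.integral_of_le zero_le_one]
    rfl
  rw [hint]
  exact (hlam.comp hstate).stronglyMeasurable.integral_prod_right'.measurable

lemma lamBrace_congr (h : ∀ γ', w γ' t = u γ' t) : lamBrace lam w γ t = lamBrace lam u γ t := by
  funext x
  simp only [lamBrace, h]

lemma IsRenormalised.congr {u0 : Fin d → ℝ → ℝ} (hw : IsRenormalised lam w u0 γ)
    (h : ∀ γ' t, 0 ≤ t → w γ' t = u γ' t) : IsRenormalised lam u u0 γ := by
  intro β hβ hmono h0 h1 φ φt hφ
  obtain ⟨ν, hν, hcdf, hweak⟩ := hw β hβ hmono h0 h1 φ φt hφ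
  refine ⟨ν, hν, fun t ht x => h γ t ht ▸ hcdf t ht x, ?_⟩
  convert hweak using 1
  · congr 1
    exact setIntegral_congr_fun measurableSet_Ici fun t ht => by simp only [h γ t ht]
  · exact setIntegral_congr_fun measurableSet_Ici fun t ht => by
      simp only [lamBrace_congr fun γ' => h γ' t ht]

theorem isRenormalised_of_forall_isCDF
    (hlam : Measurable fun y : Icc (0 : Fin d → ℝ) 1 => lam γ y)
    (hM : ∀ y ∈ Icc (0 : Fin d → ℝ) 1, ‖lam γ y‖ ≤ M)
    (hum : ∀ γ', Measurable (uncurry (u γ'))) (hu : ∀ γ' t, IsCDF (u γ' t))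
    (hchar : ∀ᵐ v ∂volume.restrict (Ioo (0 : ℝ) 1), ∀ t, 0 ≤ t →
      cdfInv (u γ t) v - cdfInv (u γ 0) v
        = ∫ s in (0 : ℝ)..t, lamBrace lam u γ s (cdfInv (u γ s) v)) :
    IsRenormalised lam u (fun γ' => u γ' 0) γ := by
  intro β hβ hmono h0 h1 φ φt hφ
  obtain ⟨m, hm_ac, hm_univ, hm_Iic⟩ := exists_measure_Ioo_measureReal_eq_sub zero_le_one
    hβ.continuousOn ((hβ.differentiableOn one_ne_zero).mono Ioo_subset_Icc_self) hmono.monotoneOn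
  have hm : IsProbabilityMeasure m := ⟨by rw [hm_univ, h0, h1, sub_zero, ENNReal.ofReal_one]⟩
  let X : ℝ → Ioo (0 : ℝ) 1 → ℝ := fun t v => cdfInv (u γ t) v
  have hX : Measurable (uncurry X) :=
    measurable_cdfInv (hu γ) fun x => (hum γ).comp measurable_prodMk_right
  have hXt (t : ℝ) : Measurable (X t) := hX.comp measurable_prodMk_left
  have hlaw (t x : ℝ) : (m.map (X t)).real (Iic x) = β (u γ t x) := by
    have hpre : X t ⁻¹' Iic x = {v : Ioo (0 : ℝ) 1 | (v : ℝ) ≤ u γ t x} :=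
      ext fun v => (hu γ t).cdfInv_le_iff v.2
    rw [map_measureReal_apply (hXt t) measurableSet_Iic, hpre, hm_Iic _ ((hu γ t).mem_Icc x), h0,
      sub_zero]
  refine ⟨fun t => m.map (X t), fun t => Measure.isProbabilityMeasure_map (hXt t).aemeasurable,
    fun t _ x => hlaw t x, ?_⟩
  simp_rw [← hlaw]
  exact weak_formulation_of_characteristics hX (measurable_lamBrace hlam hum hu)
    (fun t x => norm_lamBrace_le hM (fun γ' => hu γ' t) x)
    (hm_ac.ae_le ((ae_restrict_iff_subtype measurableSet_Ioo).mp hchar)) hφ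

end LamBrace

theorem characteristics_imply_renormalised_general {d : ℕ} {lam : Fin d → (Fin d → ℝ) → ℝ}
    {u : Fin d → ℝ → ℝ → ℝ} {γ : Fin d} {M : NNReal}
    (hlam : Measurable fun y : Icc (0 : Fin d → ℝ) 1 => lam γ y)
    (hM : ∀ y ∈ Icc (0 : Fin d → ℝ) 1, ‖lam γ y‖ ≤ M)
    (hum : ∀ γ', Measurable fun p : Ici (0 : ℝ) × ℝ => u γ' p.1 p.2)
    (hu : ∀ γ' t, 0 ≤ t → IsCDF (u γ' t))
    (hchar : ∀ᵐ v ∂volume.restrict (Ioo (0 : ℝ) 1), ∀ t, 0 ≤ t →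
      cdfInv (u γ t) v - cdfInv (u γ 0) v
        = ∫ s in (0 : ℝ)..t, lamBrace lam u γ s (cdfInv (u γ s) v)) :
    IsRenormalised lam u (fun γ' => u γ' 0) γ := by
  let w : Fin d → ℝ → ℝ → ℝ := fun γ' t => u γ' (max t 0)
  have hw (γ' : Fin d) (t : ℝ) (ht : 0 ≤ t) : w γ' t = u γ' t := by simp only [w, max_eq_left ht]
  have hmax : Measurable fun p : ℝ × ℝ =>
      ((⟨max p.1 0, mem_Ici.mpr (le_max_right _ _)⟩ : Ici (0 : ℝ)), p.2) :=
    (measurable_fst.max measurable_const).subtype_mk.prodMk measurable_snd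
  have hw_meas (γ' : Fin d) : Measurable (uncurry (w γ')) := (hum γ').comp hmax
  have hw_char : ∀ᵐ v ∂volume.restrict (Ioo (0 : ℝ) 1), ∀ t, 0 ≤ t →
      cdfInv (w γ t) v - cdfInv (w γ 0) v
        = ∫ s in (0 : ℝ)..t, lamBrace lam w γ s (cdfInv (w γ s) v) := by
    filter_upwards [hchar] with v hv t ht
    rw [hw γ t ht, hw γ 0 le_rfl, hv t ht]
    refine intervalIntegral.integral_congr fun s hs => ?_
    have hs0 : 0 ≤ s := (uIcc_of_le ht ▸ hs).1
    simp only [hw γ s hs0, lamBrace_congr fun γ' => hw γ' s hs0]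
  have hw_init : (fun γ' => w γ' 0) = fun γ' => u γ' 0 := funext fun γ' => hw γ' 0 le_rfl
  exact hw_init ▸ (isRenormalised_of_forall_isCDF hlam hM hw_meas
    (fun γ' t => hu γ' _ (le_max_right t 0)) hw_char).congr hw

/-- **Characteristics imply renormalisation**: if, for a.e. `v ∈ (0,1)`, the quantile
trajectory `t ↦ X_v^γ(t)` is Lipschitz on `[0,∞)` and satisfies
`X_v^γ(t₂) − X_v^γ(t₁) = ∫_{t₁}^{t₂} λ^γ{u}(s, X_v^γ(s)) ds`, then `u` is a
renormalised solution in the `γ`-th coordinate. -/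
theorem characteristics_imply_renormalised {d : ℕ} (hd : 1 ≤ d)
    (lam : Fin d → (Fin d → ℝ) → ℝ)
    (hlam : ∀ γ : Fin d, ContinuousOn (lam γ) (Icc (0 : Fin d → ℝ) 1))
    (u : Fin d → ℝ → ℝ → ℝ) (u0 : Fin d → ℝ → ℝ)
    (hsol : IsProbSol lam u u0)
    (hinit : ∀ (γ : Fin d) (x : ℝ), u γ 0 x = u0 γ x)
    (hL1 : ContL1loc u)
    (γ : Fin d)
    (hchar : ∀ᵐ v ∂(volume.restrict (Ioo (0:ℝ) 1)),
      (∃ K : NNReal, LipschitzOnWith K (fun t => cdfInv (u γ t) v) (Ici 0)) ∧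
      ∀ t₁ t₂ : ℝ, 0 ≤ t₁ → t₁ ≤ t₂ →
        cdfInv (u γ t₂) v - cdfInv (u γ t₁) v
          = ∫ s in t₁..t₂, lamBrace lam u γ s (cdfInv (u γ s) v)) :
    IsRenormalised lam u u0 γ := by
  obtain ⟨M, hM⟩ := isCompact_Icc.exists_bound_of_continuousOn (hlam γ)
  obtain rfl : (fun γ' => u γ' 0) = u0 := funext fun γ' => funext (hinit γ')
  exact characteristics_imply_renormalised_general (M := M.toNNReal) (hlam γ).domRestrict.measurable
    (fun y hy => (hM y hy).trans (Real.le_coe_toNNReal M)) hsol.1 hsol.2.1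
    (hchar.mono fun v hv t ht => hv.2 0 t le_rfl ht)
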